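/- Let A be a commutative noetherian local ring, let x, y ∈ A be an exact pair of zero divisors, and let a ∈ A. If a is not a unit in A, then neither G_a nor H_a is a free A-module; in fact, both G_a and H_a have infinite projective dimension. -/

import Mathlib

/-!
Formalization of results from "Construction of totally reflexive modules
from an exact pair of zero divisors" by Henrik Holm.
-/

noncomputable section

/-- Non-units `x, y` in `A` form an *exact pair of zero divisors* if
`Ann_A(x) = (y)` and `Ann_A(y) = (x)`. -/
def IsExactZeroDivisorPair {A : Type*} [CommRing A] (x y : A) : Prop :=
  ¬ IsUnit x ∧ ¬ IsUnit y ∧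
    (∀ a : A, a * x = 0 ↔ a ∈ Ideal.span {y}) ∧
    (∀ a : A, a * y = 0 ↔ a ∈ Ideal.span {x})

open Matrix in
/-- The matrix `γ_a = [[x, a], [0, y]]`. -/
def gammaMat {A : Type*} [CommRing A] (x y a : A) : Matrix (Fin 2) (Fin 2) A :=
  !![x, a; 0, y]

open Matrix in
/-- The matrix `η_a = [[y, -a], [0, x]]`. -/
def etaMat {A : Type*} [CommRing A] (x y a : A) : Matrix (Fin 2) (Fin 2) A :=
  !![y, -a; 0, x]

/-- `G_a`, the cokernel of `γ_a : A² → A²`. -/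
abbrev Gmod {A : Type*} [CommRing A] (x y a : A) : Type _ :=
  (Fin 2 → A) ⧸ LinearMap.range (Matrix.toLin' (gammaMat x y a))

/-- `H_a`, the cokernel of `η_a : A² → A²`. -/
abbrev Hmod {A : Type*} [CommRing A] (x y a : A) : Type _ :=
  (Fin 2 → A) ⧸ LinearMap.range (Matrix.toLin' (etaMat x y a))

universe u

/-!
The matrices `γ_a` and `η_a` are exact in both orders, so the complex `⋯ ⟶ A² ⟶ A² ⟶ A²` whose
differentials alternate between them is a free resolution of `G_a`; exchanging `x` with `y` and `a`
with `-a` turns it into one of `H_a`. If `x`, `y` and `a` lie in a proper ideal `I`, then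
`Hom(-, A ⧸ I)` kills every differential, so `Ext^n(G_a, A ⧸ I) ≅ Hom(A², A ⧸ I) ≠ 0` for all `n`.
-/

section ProjectiveResolution

open CategoryTheory Limits

variable {C : Type*} [Category* C] [Abelian C]

/-- If `Hom(-, Y)` kills all differentials of a projective resolution of `X`, then `Ext^n(X, Y)` is
the module of morphisms from the `n`-th term of the resolution to `Y`. This generalizes how a
minimal resolution over a local ring computes `Ext` into the residue field. -/
def extIsoHomOfDCompEqZero {R : Type*} [Ring R] [Linear R C] [EnoughProjectives C]
    {X Y : C} (P : ProjectiveResolution X)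
    (hd : ∀ (i j : ℕ) (s : P.complex.X j ⟶ Y), P.complex.d i j ≫ s = 0) (n : ℕ) :
    ((Ext R C n).obj (Opposite.op X)).obj Y ≅ ModuleCat.of R (P.complex.X n ⟶ Y) :=
  have d_eq_zero (i j : ℕ) : (P.complex.linearYonedaObj R Y).d i j = 0 :=
    ModuleCat.hom_ext (LinearMap.ext fun s => hd j i s)
  P.isoExt n Y ≪≫
    ((P.complex.linearYonedaObj R Y).isoHomologyπ _ n rfl (d_eq_zero _ n)).symm ≪≫
    (P.complex.linearYonedaObj R Y).iCyclesIso n _ rfl (d_eq_zero n _)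

section Periodic

variable {P Z : C} {f g : P ⟶ P} (hfg : f ≫ g = 0) (hgf : g ≫ f = 0)

/-- The `2`-periodic complex `⋯ ⟶ P --g--> P --f--> P`, the last `P` being in degree `0`. -/
def periodicComplex : ChainComplex C ℕ :=
  HomologicalComplex.alternatingConst P hgf hfg fun _ _ => ComplexShape.down_nat_odd_add

lemma periodicComplex_exactAt_succ (hfg_exact : (ShortComplex.mk f g hfg).Exact)
    (hgf_exact : (ShortComplex.mk g f hgf).Exact) (n : ℕ) :
    (periodicComplex hfg hgf).ExactAt (n + 1) := by
  have hprev : (ComplexShape.down ℕ).Rel (n + 2) (n + 1) := rfl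
  have hnext : (ComplexShape.down ℕ).Rel (n + 1) n := rfl
  rw [HomologicalComplex.exactAt_iff' _ (n + 2) (n + 1) n (by simp) (by simp)]
  obtain heven | hodd := Nat.even_or_odd (n + 1)
  · exact (ShortComplex.exact_iff_of_iso
      (HomologicalComplex.alternatingConstScIsoEven P hgf hfg _ hprev hnext heven)).2 hfg_exact
  · exact (ShortComplex.exact_iff_of_iso
      (HomologicalComplex.alternatingConstScIsoOdd P hgf hfg _ hprev hnext hodd)).2 hgf_exact

lemma periodicComplex_d_comp_eq_zero {Y : C} (hf : ∀ s : P ⟶ Y, f ≫ s = 0)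
    (hg : ∀ s : P ⟶ Y, g ≫ s = 0) (i j : ℕ) (s : (periodicComplex hfg hgf).X j ⟶ Y) :
    (periodicComplex hfg hgf).d i j ≫ s = 0 := by
  change (if _ : (ComplexShape.down ℕ).Rel i j then if _ : Even i then g else f else 0) ≫ s = 0
  split_ifs
  exacts [hg s, hf s, zero_comp]

variable {π : P ⟶ Z} (hπ : f ≫ π = 0)

/-- The augmentation of the periodic complex by a morphism `π` that vanishes on the image of `f`. -/
def periodicComplexAugmentation :
    periodicComplex hfg hgf ⟶ (ChainComplex.single₀ C).obj Z :=
  ((periodicComplex hfg hgf).toSingle₀Equiv Z).symm ⟨π, hπ⟩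

lemma quasiIso_periodicComplexAugmentation [Epi π] (hfg_exact : (ShortComplex.mk f g hfg).Exact)
    (hgf_exact : (ShortComplex.mk g f hgf).Exact) (hπ_exact : (ShortComplex.mk f π hπ).Exact) :
    QuasiIso (periodicComplexAugmentation hfg hgf hπ) where
  quasiIsoAt
    | 0 => by
      have f_zero : (periodicComplexAugmentation hfg hgf hπ).f 0 = π :=
        ChainComplex.toSingle₀Equiv_symm_apply_f_zero (C := periodicComplex hfg hgf) π hπ
      rw [ChainComplex.quasiIsoAt₀_iff, ShortComplex.quasiIso_iff_of_zeros' _ rfl rfl rfl]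
      change (ShortComplex.mk f ((periodicComplexAugmentation hfg hgf hπ).f 0) _).Exact ∧
        Epi ((periodicComplexAugmentation hfg hgf hπ).f 0)
      simp_rw [f_zero]
      exact ⟨hπ_exact, ‹Epi π›⟩
    | n + 1 => by
      rw [quasiIsoAt_iff_exactAt' _ _ (ChainComplex.exactAt_succ_single_obj ..)]
      exact periodicComplex_exactAt_succ hfg hgf hfg_exact hgf_exact n

/-- The `2`-periodic projective resolution `⋯ ⟶ P --g--> P --f--> P --π--> Z` of a cokernel of `f`,
for a projective object `P` and endomorphisms `f` and `g` that are exact in both orders. -/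
def periodicProjectiveResolution [Projective P] [Epi π]
    (hfg_exact : (ShortComplex.mk f g hfg).Exact) (hgf_exact : (ShortComplex.mk g f hgf).Exact)
    (hπ_exact : (ShortComplex.mk f π hπ).Exact) : ProjectiveResolution Z where
  complex := periodicComplex hfg hgf
  projective _ := inferInstanceAs (Projective P)
  π := periodicComplexAugmentation hfg hgf hπ
  quasiIso := quasiIso_periodicComplexAugmentation hfg hgf hπ hfg_exact hgf_exact hπ_exact

lemma nontrivial_Ext_of_periodic {R : Type*} [Ring R] [Linear R C] [EnoughProjectives C]
    [Projective P] [Epi π] (hfg_exact : (ShortComplex.mk f g hfg).Exact)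
    (hgf_exact : (ShortComplex.mk g f hgf).Exact) (hπ_exact : (ShortComplex.mk f π hπ).Exact)
    {Y : C} [Nontrivial (P ⟶ Y)] (hf : ∀ s : P ⟶ Y, f ≫ s = 0) (hg : ∀ s : P ⟶ Y, g ≫ s = 0)
    (n : ℕ) : Nontrivial (((Ext R C n).obj (Opposite.op Z)).obj Y) :=
  let e := extIsoHomOfDCompEqZero (R := R)
    (periodicProjectiveResolution hfg hgf hπ hfg_exact hgf_exact hπ_exact)
    (periodicComplex_d_comp_eq_zero hfg hgf hf hg) n
  have : Nontrivial (ModuleCat.of R (P ⟶ Y)) := ‹Nontrivial (P ⟶ Y)›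
  Equiv.nontrivial (β := ModuleCat.of R (P ⟶ Y)) e.toLinearEquiv.toEquiv

end Periodic

end ProjectiveResolution

section Module

open CategoryTheory

universe v

variable {A : Type u} [CommRing A]

lemma nontrivial_Ext_quotient_range_of_comp_eq_zero [Small.{v} A] {F N : Type v} [AddCommGroup F]
    [Module A F] [Module.Projective A F] [AddCommGroup N] [Module A N] [Nontrivial (F →ₗ[A] N)]
    {f g : F →ₗ[A] F} (hfg : Function.Exact f g) (hgf : Function.Exact g f)
    (hf : ∀ s : F →ₗ[A] N, s ∘ₗ f = 0) (hg : ∀ s : F →ₗ[A] N, s ∘ₗ g = 0) (n : ℕ) :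
    Nontrivial (((Ext A (ModuleCat.{v} A) n).obj
      (Opposite.op (ModuleCat.of A (F ⧸ LinearMap.range f)))).obj (ModuleCat.of A N)) := by
  have : Projective (ModuleCat.of A F) := (IsProjective.iff_projective F).1 inferInstance
  have : Epi (ModuleCat.ofHom (LinearMap.range f).mkQ) :=
    (ModuleCat.epi_iff_surjective _).2 (Submodule.mkQ_surjective _)
  have : Nontrivial (ModuleCat.of A F ⟶ ModuleCat.of A N) := ModuleCat.homEquiv.nontrivial
  exact nontrivial_Ext_of_periodic _ _ _
    (ModuleCat.shortComplex_exact (.moduleCatMk f g hfg.linearMap_comp_eq_zero) hfg)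
    (ModuleCat.shortComplex_exact (.moduleCatMk g f hgf.linearMap_comp_eq_zero) hgf)
    (ModuleCat.shortComplex_exact (.moduleCatMk f _ (LinearMap.range_mkQ_comp f))
      f.exact_map_mkQ_range)
    (fun s => ModuleCat.hom_ext (hf s.hom)) (fun s => ModuleCat.hom_ext (hg s.hom)) n

lemma not_projective_of_nontrivial_Ext_succ [Small.{v} A] {M : Type v} [AddCommGroup M]
    [Module A M] {N : ModuleCat.{v} A} {n : ℕ}
    (h : Nontrivial (((Ext A (ModuleCat.{v} A) (n + 1)).obj
      (Opposite.op (ModuleCat.of A M))).obj N)) :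
    ¬ Module.Projective A M := fun hM =>
  have : Projective (ModuleCat.of A M) := (IsProjective.iff_projective M).1 hM
  not_nontrivial_iff_subsingleton.2 (ModuleCat.subsingleton_of_isZero
    (isZero_Ext_succ_of_projective (R := A) (ModuleCat.of A M) N n)) h

lemma comp_toLin'_eq_zero_of_mem_annihilator {m n N : Type*} [Fintype n] [DecidableEq n]
    [Finite m] [AddCommGroup N] [Module A N] {M : Matrix m n A}
    (hM : ∀ i j, M i j ∈ Module.annihilator A N) (s : (m → A) →ₗ[A] N) :
    s ∘ₗ Matrix.toLin' M = 0 := by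
  classical
  cases nonempty_fintype m
  refine LinearMap.ext fun v => ?_
  have mulVec_smul_eq_zero (i : m) (z : N) : (M.mulVec v) i • z = 0 :=
    Module.mem_annihilator.1 (Ideal.sum_mem _ fun j _ => Ideal.mul_mem_right _ _ (hM i j)) z
  rw [LinearMap.comp_apply, Matrix.toLin'_apply, s.pi_apply_eq_sum_univ, LinearMap.zero_apply]
  exact Finset.sum_eq_zero fun i _ => mulVec_smul_eq_zero i _

end Module

section GammaEta

open CategoryTheory

variable {A : Type u} [CommRing A] {x y : A}

lemma gammaMat_mulVec (x y a : A) (v : Fin 2 → A) :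
    (gammaMat x y a).mulVec v = ![x * v 0 + a * v 1, y * v 1] := by
  ext i
  fin_cases i <;> simp [gammaMat, Matrix.mulVec, dotProduct]

lemma etaMat_mulVec (x y a : A) (v : Fin 2 → A) :
    (etaMat x y a).mulVec v = ![y * v 0 - a * v 1, x * v 1] := by
  ext i
  fin_cases i <;> simp [etaMat, Matrix.mulVec, dotProduct, sub_eq_add_neg]

namespace IsExactZeroDivisorPair

lemma symm (hxy : IsExactZeroDivisorPair x y) : IsExactZeroDivisorPair y x :=
  ⟨hxy.2.1, hxy.1, hxy.2.2.2, hxy.2.2.1⟩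

lemma mul_eq_zero (hxy : IsExactZeroDivisorPair x y) : x * y = 0 :=
  (hxy.2.2.2 x).2 (Ideal.mem_span_singleton_self x)

lemma dvd_of_mul_eq_zero (hxy : IsExactZeroDivisorPair x y) {b : A} (h : x * b = 0) : y ∣ b :=
  Ideal.mem_span_singleton.1 ((hxy.2.2.1 b).1 (by rwa [mul_comm]))

lemma exact_gammaMat_etaMat (hxy : IsExactZeroDivisorPair x y) (a : A) :
    Function.Exact (Matrix.toLin' (gammaMat x y a)) (Matrix.toLin' (etaMat x y a)) := by
  refine Function.Exact.of_comp_of_mem_range (funext fun v => ?_) fun v hv => ?_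
  · simp only [Function.comp_apply, Matrix.toLin'_apply, gammaMat_mulVec, etaMat_mulVec]
    ext i
    fin_cases i
    · change y * (x * v 0 + a * v 1) - a * (y * v 1) = 0
      linear_combination v 0 * hxy.mul_eq_zero
    · change x * (y * v 1) = 0
      linear_combination v 1 * hxy.mul_eq_zero
  · rw [Matrix.toLin'_apply, etaMat_mulVec] at hv
    have hv₀ : y * v 0 - a * v 1 = 0 := congrFun hv 0
    have hv₁ : x * v 1 = 0 := congrFun hv 1
    obtain ⟨c, hc⟩ := hxy.dvd_of_mul_eq_zero hv₁
    obtain ⟨b, hb⟩ := hxy.symm.dvd_of_mul_eq_zero (b := v 0 - a * c)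
      (by linear_combination hv₀ + a * hc)
    refine ⟨![b, c], ?_⟩
    rw [Matrix.toLin'_apply, gammaMat_mulVec]
    ext i
    fin_cases i
    · change x * b + a * c = v 0
      linear_combination -hb
    · exact hc.symm

lemma exact_etaMat_gammaMat (hxy : IsExactZeroDivisorPair x y) (a : A) :
    Function.Exact (Matrix.toLin' (etaMat x y a)) (Matrix.toLin' (gammaMat x y a)) := by
  have h := hxy.symm.exact_gammaMat_etaMat (-a)
  rwa [etaMat, neg_neg] at h

lemma nontrivial_Ext_Gmod (hxy : IsExactZeroDivisorPair x y) {a : A} {I : Ideal A} (hI : I ≠ ⊤)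
    (hx : x ∈ I) (hy : y ∈ I) (ha : a ∈ I) (n : ℕ) :
    Nontrivial (((Ext A (ModuleCat.{u} A) n).obj
      (Opposite.op (ModuleCat.of A (Gmod x y a)))).obj (ModuleCat.of A (A ⧸ I))) := by
  have : Nontrivial (A ⧸ I) := Ideal.Quotient.nontrivial_iff.2 hI
  have : Nontrivial ((Fin 2 → A) →ₗ[A] A ⧸ I) := (Module.piEquiv (Fin 2) A (A ⧸ I)).symm.nontrivial
  refine nontrivial_Ext_quotient_range_of_comp_eq_zero (hxy.exact_gammaMat_etaMat a)
    (hxy.exact_etaMat_gammaMat a) (comp_toLin'_eq_zero_of_mem_annihilator ?_)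
    (comp_toLin'_eq_zero_of_mem_annihilator ?_) n
  all_goals
    rw [Ideal.annihilator_quotient]
    simp [gammaMat, etaMat, Fin.forall_fin_two, hx, hy, ha]

end IsExactZeroDivisorPair

end GammaEta

open CategoryTheory in
theorem G_H_not_free_of_not_isUnit_general {A : Type u} [CommRing A] {x y : A}
    (hxy : IsExactZeroDivisorPair x y) {a : A} {I : Ideal A} (hI : I ≠ ⊤) (hx : x ∈ I)
    (hy : y ∈ I) (ha : a ∈ I) :
    ¬ Module.Free A (Gmod x y a) ∧ ¬ Module.Free A (Hmod x y a) ∧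
    (∀ n : ℕ, ∃ N : ModuleCat.{u} A, Nontrivial
      (((Ext A (ModuleCat A) n).obj
        (Opposite.op (ModuleCat.of A (Gmod x y a)))).obj N)) ∧
    (∀ n : ℕ, ∃ N : ModuleCat.{u} A, Nontrivial
      (((Ext A (ModuleCat A) n).obj
        (Opposite.op (ModuleCat.of A (Hmod x y a)))).obj N)) := by
  have hG := hxy.nontrivial_Ext_Gmod hI hx hy ha
  have hH : ∀ n, Nontrivial (((Ext A (ModuleCat A) n).obj
      (Opposite.op (ModuleCat.of A (Hmod x y a)))).obj (ModuleCat.of A (A ⧸ I))) :=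
    hxy.symm.nontrivial_Ext_Gmod hI hy hx (neg_mem ha)
  exact ⟨fun _ => not_projective_of_nontrivial_Ext_succ (hG 1) inferInstance,
    fun _ => not_projective_of_nontrivial_Ext_succ (hH 1) inferInstance,
    fun n => ⟨_, hG n⟩, fun n => ⟨_, hH n⟩⟩

open CategoryTheory in
/-- **Corollary (3.8)(b).** For an exact pair of zero divisors `x, y` and a
non-unit `a ∈ A`, neither `G_a` nor `H_a` is free; in fact both have infinite
projective dimension (expressed here by the standard characterization: for
every `n` there is a module `N` with `Ext_A^n(-, N) ≠ 0`). -/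
theorem G_H_not_free_of_not_isUnit {A : Type u} [CommRing A]
    [IsNoetherianRing A] [IsLocalRing A] {x y : A}
    (hxy : IsExactZeroDivisorPair x y) {a : A} (ha : ¬ IsUnit a) :
    ¬ Module.Free A (Gmod x y a) ∧ ¬ Module.Free A (Hmod x y a) ∧
    (∀ n : ℕ, ∃ N : ModuleCat.{u} A, Nontrivial
      (((Ext A (ModuleCat A) n).obj
        (Opposite.op (ModuleCat.of A (Gmod x y a)))).obj N)) ∧
    (∀ n : ℕ, ∃ N : ModuleCat.{u} A, Nontrivial
      (((Ext A (ModuleCat A) n).obj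
        (Opposite.op (ModuleCat.of A (Hmod x y a)))).obj N)) :=
  G_H_not_free_of_not_isUnit_general hxy (IsLocalRing.maximalIdeal.isMaximal A).ne_top
    hxy.1 hxy.2.1 ha
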